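/- arXiv:1511.00378 — 6 statements merged into one kernel-verified Lean document; each statement's English description precedes it below -/
import Mathlib

section
/- Let S be an n×n complex Hermitian positive semidefinite matrix and c ≥ 0. Then the capacity-loss function γ ↦ Real.log((det(I + γ·S)).re) − Real.log((det(I + γ_e(γ)·S)).re), where γ_e(γ) = γ/(cγ + 1), is monotone nondecreasing on [0, ∞). In particular the capacity loss caused by CSI difference grows with the SNR γ. -/
open ComplexOrder

lemma det_aux {n : ℕ} (S : Matrix (Fin n) (Fin n) ℂ) (h : S.IsHermitian) (t : ℝ) :
    (Matrix.det (1 + (t : ℂ) • S)).re = ∏ i, (1 + t * h.eigenvalues i) := by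
  have key : Matrix.det (1 + (t : ℂ) • S) = ∏ i, (1 + (t : ℂ) * (h.eigenvalues i : ℂ)) := by
    have h1 : 1 + (t : ℂ) • S = Unitary.conjStarAlgAut ℂ _ h.eigenvectorUnitary
        (Matrix.diagonal (fun i => 1 + (t : ℂ) * (h.eigenvalues i : ℂ))) := by
      have h2 : Matrix.diagonal (fun i => 1 + (t : ℂ) * (h.eigenvalues i : ℂ)) =
          1 + (t : ℂ) • Matrix.diagonal (RCLike.ofReal ∘ h.eigenvalues : Fin n → ℂ) := by
        ext i j
        by_cases hij : i = j
        · subst hij; simp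
        · simp [hij]
      rw [h2, map_add, map_one, map_smul, ← h.spectral_theorem]
    rw [h1, Unitary.conjStarAlgAut_apply, Matrix.det_mul_comm, ← mul_assoc]
    simp
  rw [key]
  have : ∏ i, (1 + (t : ℂ) * (h.eigenvalues i : ℂ)) =
      ((∏ i, (1 + t * h.eigenvalues i) : ℝ) : ℂ) := by push_cast; rfl
  rw [this, Complex.ofReal_re]

lemma scalar_aux (c l a b : ℝ) (hc : 0 ≤ c) (hl : 0 ≤ l) (ha : 0 ≤ a) (hab : a ≤ b) :
    Real.log (1 + a * l) - Real.log (1 + a / (c * a + 1) * l) ≤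
      Real.log (1 + b * l) - Real.log (1 + b / (c * b + 1) * l) := by
  have hb : 0 ≤ b := ha.trans hab
  rw [← Real.log_div (by positivity) (by positivity), ← Real.log_div (by positivity) (by positivity)]
  apply Real.log_le_log (by positivity)
  have e : ∀ x : ℝ, 0 ≤ x → (1 + x * l) / (1 + x / (c * x + 1) * l) =
      1 + c * l * (x ^ 2 / (1 + (c + l) * x)) := by
    intro x hx
    have h1 : 0 < c * x + 1 := by positivity
    have h2 : 0 < 1 + (c + l) * x := by positivity
    have h3 : 1 + x / (c * x + 1) * l = (1 + (c + l) * x) / (c * x + 1) := by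
      field_simp; ring
    rw [h3]
    field_simp
    ring
  rw [e a ha, e b hb]
  gcongr 1 + c * l * ?_
  rw [div_le_div_iff₀ (by positivity) (by positivity)]
  have h1 : 0 ≤ (b - a) * (b + a) := mul_nonneg (by linarith) (by linarith)
  have h2 : 0 ≤ (c + l) * (a * b) * (b - a) := mul_nonneg (by positivity) (by linarith)
  nlinarith

/-- The capacity-loss function
`γ ↦ log (det (I + γ • S)).re − log (det (I + (γ/(cγ+1)) • S)).re`
is monotone nondecreasing on `[0, ∞)`. -/
theorem capacity_loss_monotone_in_snr
    {n : ℕ} (S : Matrix (Fin n) (Fin n) ℂ)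
    (hHerm : S.IsHermitian) (hS : S.PosSemidef)
    (c : ℝ) (hc : 0 ≤ c) :
    MonotoneOn
      (fun γ : ℝ =>
        Real.log ((Matrix.det (1 + (γ : ℂ) • S)).re) -
          Real.log ((Matrix.det (1 + ((γ / (c * γ + 1) : ℝ) : ℂ) • S)).re))
      (Set.Ici (0 : ℝ)) := by
  have hl : ∀ i, 0 ≤ hHerm.eigenvalues i := fun i => hS.eigenvalues_nonneg i
  have hlog : ∀ t : ℝ, 0 ≤ t → Real.log ((Matrix.det (1 + (t : ℂ) • S)).re) =
      ∑ i, Real.log (1 + t * hHerm.eigenvalues i) := by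
    intro t ht
    rw [det_aux S hHerm, Real.log_prod]
    intro i _
    have := mul_nonneg ht (hl i)
    positivity
  intro a ha b hb hab
  rw [Set.mem_Ici] at ha hb
  dsimp only
  rw [hlog a ha, hlog b hb, hlog _ (by positivity), hlog _ (by positivity),
    ← Finset.sum_sub_distrib, ← Finset.sum_sub_distrib]
  exact Finset.sum_le_sum fun i _ => scalar_aux c _ a b hc (hl i) ha hab
end

section
/- Let S be an n×n complex Hermitian positive semidefinite matrix and fix γ ≥ 0. Then the map c ↦ Real.log((det(I + γ·S)).re) − Real.log((det(I + (γ/(cγ+1))·S)).re) is monotone nondecreasing on [0, ∞); that is, the capacity loss of the grouped subcarrier is nondecreasing in the CSI-difference variance parameter c, so larger CSI difference (hence larger subcarrier group size) incurs greater capacity loss. -/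
open ComplexOrder

lemma det_one_add_smul_re {n : ℕ} (S : Matrix (Fin n) (Fin n) ℂ)
    (hH : S.IsHermitian) (t : ℝ) :
    (Matrix.det (1 + (t : ℂ) • S)).re = ∏ i, (1 + t * hH.eigenvalues i) := by
  have key : Matrix.det (1 + (t : ℂ) • S) = ∏ i, (1 + (t : ℂ) * (hH.eigenvalues i : ℂ)) := by
    conv_lhs => rw [hH.spectral_theorem, Unitary.conjStarAlgAut_apply, ← smul_mul_assoc, ← smul_mul_assoc,
      mul_assoc, Matrix.det_one_add_mul_comm, mul_assoc, mul_smul_comm,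
      Unitary.coe_star_mul_self, mul_smul_comm, mul_one]
    rw [← Matrix.diagonal_one, ← Matrix.diagonal_smul, Matrix.diagonal_add, Matrix.det_diagonal]
    simp
  rw [key]
  have : (∏ i, (1 + (t : ℂ) * (hH.eigenvalues i : ℂ)))
      = ((∏ i, (1 + t * hH.eigenvalues i) : ℝ) : ℂ) := by push_cast; rfl
  rw [this, Complex.ofReal_re]

/-- For fixed SNR `γ ≥ 0`, the capacity loss
`c ↦ log (det (I + γ • S)).re − log (det (I + (γ/(cγ+1)) • S)).re`
is monotone nondecreasing in the CSI-difference variance parameter `c` on `[0, ∞)`. -/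
theorem capacity_loss_monotone_in_variance
    {n : ℕ} (S : Matrix (Fin n) (Fin n) ℂ)
    (hHerm : S.IsHermitian) (hS : S.PosSemidef)
    (γ : ℝ) (hγ : 0 ≤ γ) :
    MonotoneOn
      (fun c : ℝ =>
        Real.log ((Matrix.det (1 + (γ : ℂ) • S)).re) -
          Real.log ((Matrix.det (1 + ((γ / (c * γ + 1) : ℝ) : ℂ) • S)).re))
      (Set.Ici (0 : ℝ)) := by
  intro a ha b hb hab
  simp only [Set.mem_Ici] at ha hb
  have h0 : 0 ≤ γ / (b * γ + 1) := by positivity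
  have hle : γ / (b * γ + 1) ≤ γ / (a * γ + 1) := by gcongr
  have hev := hS.eigenvalues_nonneg
  simp only [det_one_add_smul_re S hS.isHermitian]
  apply sub_le_sub_left
  apply Real.log_le_log
  · apply Finset.prod_pos
    intro i _
    have := mul_nonneg h0 (hev i)
    linarith
  · apply Finset.prod_le_prod
    · intro i _
      have := mul_nonneg h0 (hev i)
      linarith
    · intro i _
      have := mul_le_mul_of_nonneg_right hle (hev i)
      linarith
end

section
/- Let S be an n×n complex Hermitian positive semidefinite matrix and c > 0. Then for every γ ≥ 0, (det(I + (γ/(cγ+1))·S)).re ≤ (det(I + (1/c)·S)).re; that is, the channel capacity at a grouped subcarrier with CSI-difference variance parameter c is uniformly upper-bounded over all SNR values by log det(I + (1/c)·S). -/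
open ComplexOrder

theorem det_one_add_smul_aux {n : ℕ} (S : Matrix (Fin n) (Fin n) ℂ)
    (hS : S.IsHermitian) (t : ℝ) :
    Matrix.det (1 + (t : ℂ) • S) = ((∏ i, (1 + t * hS.eigenvalues i) : ℝ) : ℂ) := by
  conv_lhs => rw [hS.spectral_theorem, Unitary.conjStarAlgAut_apply]
  rw [mul_assoc, ← Matrix.mul_smul, Matrix.det_one_add_mul_comm, Matrix.smul_mul, mul_assoc,
    Unitary.coe_star_mul_self, mul_one, ← Matrix.diagonal_one, ← Matrix.diagonal_smul,
    Matrix.diagonal_add, Matrix.det_diagonal]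
  simp

/-- The determinant at the equivalent SNR `γ/(cγ+1)` is uniformly bounded above
by the determinant at SNR `1/c`, for every `γ ≥ 0`. -/
theorem det_equivalent_snr_le_det_inv_c
    {n : ℕ} (S : Matrix (Fin n) (Fin n) ℂ)
    (hHerm : S.IsHermitian) (hS : S.PosSemidef)
    (c : ℝ) (hc : 0 < c) :
    ∀ γ : ℝ, 0 ≤ γ →
      (Matrix.det (1 + ((γ / (c * γ + 1) : ℝ) : ℂ) • S)).re ≤
        (Matrix.det (1 + ((1 / c : ℝ) : ℂ) • S)).re := by
  intro γ hγ
  rw [det_one_add_smul_aux S hHerm, det_one_add_smul_aux S hHerm, Complex.ofReal_re,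
    Complex.ofReal_re]
  have hev : ∀ i, 0 ≤ hHerm.eigenvalues i := fun i => hS.eigenvalues_nonneg i
  have hp : 0 < c * γ + 1 := by positivity
  have ht : γ / (c * γ + 1) ≤ 1 / c := by
    rw [div_le_div_iff₀ hp hc]
    nlinarith
  have h0 : 0 ≤ γ / (c * γ + 1) := by positivity
  apply Finset.prod_le_prod
  · intro i _
    have := mul_nonneg h0 (hev i)
    linarith
  · intro i _
    have := mul_le_mul_of_nonneg_right ht (hev i)
    linarith
end

section
/- (Monotonicity of the relative capacity loss, scalar form of Corollary 1.) For a fixed real c > 0, the relative capacity loss function f(γ) = 1 − Real.log(1 + γ/(cγ + 1)) / Real.log(1 + γ) is monotone nondecreasing on (0, ∞). Consequently, under a total transmit power constraint (per-antenna SNR γ = ρ/N decreasing in the antenna number N), the relative capacity loss decreases as the antenna number increases. -/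
lemma rcl_slope (c : ℝ) (hc : 0 < c) (a b : ℝ) (ha : 0 ≤ a) (hab : a < b) :
    ∃ z ∈ Set.Ioo a b,
      (Real.log (1 + (c + 1) * b) - Real.log (1 + c * b))
        - (Real.log (1 + (c + 1) * a) - Real.log (1 + c * a))
      = (Real.log (1 + b) - Real.log (1 + a)) *
        ((1 + z) / ((1 + c * z) * (1 + (c + 1) * z))) := by
  have key : ∀ k : ℝ, 0 < k → ∀ x : ℝ, 0 ≤ x →
      HasDerivAt (fun x : ℝ => Real.log (1 + k * x)) (k / (1 + k * x)) x := by
    intro k hk x hx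
    have h1 : HasDerivAt (fun x : ℝ => 1 + k * x) k x := by
      simpa using ((hasDerivAt_id x).const_mul k).const_add 1
    exact h1.log (by positivity)
  have hg : ∀ x : ℝ, 0 ≤ x → HasDerivAt
      (fun x : ℝ => Real.log (1 + (c + 1) * x) - Real.log (1 + c * x))
      ((c + 1) / (1 + (c + 1) * x) - c / (1 + c * x)) x := fun x hx =>
    (key (c + 1) (by positivity) x hx).sub (key c hc x hx)
  have hh : ∀ x : ℝ, 0 ≤ x → HasDerivAt
      (fun x : ℝ => Real.log (1 + x)) (1 / (1 + x)) x := fun x hx => by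
    simpa using key 1 one_pos x hx
  obtain ⟨z, hz, e⟩ := exists_ratio_hasDerivAt_eq_ratio_slope _ _ hab
    (fun x hx => (hg x (ha.trans hx.1)).continuousAt.continuousWithinAt)
    (fun x hx => hg x (ha.trans hx.1.le)) _ _
    (fun x hx => (hh x (ha.trans hx.1)).continuousAt.continuousWithinAt)
    (fun x hx => hh x (ha.trans hx.1.le))
  refine ⟨z, hz, ?_⟩
  have hz0 : 0 < z := ha.trans_lt hz.1
  have h1 : (1 + z) ≠ 0 := by positivity
  have h2 : (1 + c * z) ≠ 0 := by positivity
  have h3 : (1 + (c + 1) * z) ≠ 0 := by positivity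
  have e2 : (c + 1) / (1 + (c + 1) * z) - c / (1 + c * z)
      = (1 + z) / ((1 + c * z) * (1 + (c + 1) * z)) * (1 / (1 + z)) := by
    field_simp
    ring
  rw [e2, ← mul_assoc] at e
  exact (mul_right_cancel₀ (by positivity) e).symm

/-- Monotonicity of the relative capacity loss (scalar form of Corollary 1):
for fixed `c > 0`, `γ ↦ 1 - log (1 + γ/(cγ+1)) / log (1 + γ)` is monotone
nondecreasing on `(0, ∞)`. -/
theorem relative_capacity_loss_monotone
    (c : ℝ) (hc : 0 < c) :
    MonotoneOn
      (fun γ : ℝ => 1 - Real.log (1 + γ / (c * γ + 1)) / Real.log (1 + γ))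
      (Set.Ioi (0 : ℝ)) := by
  intro x hx y hy hxy
  rcases hxy.eq_or_lt with rfl | hlt
  · exact le_rfl
  have hx : 0 < x := hx
  have hy : 0 < y := hy
  have hG : ∀ t : ℝ, 0 < t → Real.log (1 + t / (c * t + 1))
      = Real.log (1 + (c + 1) * t) - Real.log (1 + c * t) := by
    intro t ht
    rw [← Real.log_div (by positivity) (by positivity)]
    congr 1
    have : c * t + 1 ≠ 0 := by positivity
    have : 1 + c * t ≠ 0 := by positivity
    field_simp
    ring
  obtain ⟨z, hz, e⟩ := rcl_slope c hc 0 x le_rfl hx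
  obtain ⟨w, hw, e'⟩ := rcl_slope c hc x y hx.le hlt
  simp only [mul_zero, add_zero, Real.log_one, sub_zero] at e
  have hz0 : 0 < z := hz.1
  have hw0 : 0 < w := hx.trans hw.1
  have hzw : z < w := hz.2.trans hw.1
  have hr : (1 + w) / ((1 + c * w) * (1 + (c + 1) * w))
      ≤ (1 + z) / ((1 + c * z) * (1 + (c + 1) * z)) := by
    rw [div_le_div_iff₀ (by positivity) (by positivity)]
    obtain ⟨d, rfl⟩ : ∃ d, w = z + d := ⟨w - z, by ring⟩
    have hd : 0 < d := by linarith
    rw [← sub_nonneg]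
    ring_nf
    positivity
  have hlx : 0 < Real.log (1 + x) := Real.log_pos (by linarith)
  have hly : Real.log (1 + x) < Real.log (1 + y) :=
    Real.log_lt_log (by linarith) (by linarith)
  simp only
  rw [hG x hx, hG y hy]
  apply sub_le_sub_left
  rw [div_le_div_iff₀ (hlx.trans hly) hlx]
  generalize Real.log (1 + (c + 1) * x) - Real.log (1 + c * x) = A at *
  generalize Real.log (1 + (c + 1) * y) - Real.log (1 + c * y) = B at *
  have := mul_le_mul_of_nonneg_left hr (mul_nonneg (sub_nonneg.2 hly.le) hlx.le)
  have hB := eq_add_of_sub_eq e'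
  rw [hB]
  subst e
  nlinarith
end

section
/- (Corollary 1, massive-MIMO limit formula.) Let N ≥ 1 be a natural number, ρ > 0 the total transmit power, σ² > 0 the CSI-difference variance, and let S = N·I be N times the N×N complex identity matrix. Set the per-antenna SNR γ = ρ/N and the equivalent SNR γ_e = γ/(Nσ²γ + 1). Then the relative capacity loss satisfies 1 − Real.log((det(I + γ_e·S)).re) / Real.log((det(I + γ·S)).re) = 1 − Real.log(1 + ρ/(ρσ² + 1)) / Real.log(1 + ρ), a constant independent of N; indeed det(I + γ·S) = (1 + ρ)^N and det(I + γ_e·S) = (1 + ρ/(ρσ² + 1))^N. -/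
/-- Corollary 1, massive-MIMO limit formula: with `S = N • I`, per-antenna SNR
`γ = ρ/N` and equivalent SNR `γₑ = γ/(Nσ²γ+1)`, the determinants evaluate to
`(1+ρ)^N` and `(1+ρ/(ρσ²+1))^N`, so the relative capacity loss equals
`1 - log (1 + ρ/(ρσ²+1)) / log (1 + ρ)`, independently of `N`. -/
theorem massive_mimo_relative_capacity_loss
    (N : ℕ) (hN : 1 ≤ N) (ρ σ2 : ℝ) (hρ : 0 < ρ) (hσ : 0 < σ2)
    (S : Matrix (Fin N) (Fin N) ℂ) (hSdef : S = (N : ℂ) • (1 : Matrix (Fin N) (Fin N) ℂ))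
    (γ γe : ℝ) (hγ : γ = ρ / N) (hγe : γe = γ / (N * σ2 * γ + 1)) :
    Matrix.det (1 + (γ : ℂ) • S) = ((1 + ρ : ℝ) : ℂ) ^ N ∧
    Matrix.det (1 + (γe : ℂ) • S) = ((1 + ρ / (ρ * σ2 + 1) : ℝ) : ℂ) ^ N ∧
    1 - Real.log ((Matrix.det (1 + (γe : ℂ) • S)).re) /
          Real.log ((Matrix.det (1 + (γ : ℂ) • S)).re) =
      1 - Real.log (1 + ρ / (ρ * σ2 + 1)) / Real.log (1 + ρ) := by
  have hN0 : (N : ℝ) ≠ 0 := by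
    have : 0 < N := hN
    positivity
  have key : ∀ t a : ℝ, t * N = a →
      Matrix.det (1 + (t : ℂ) • S) = ((1 + a : ℝ) : ℂ) ^ N := by
    intro t a h
    have e : (1 : Matrix (Fin N) (Fin N) ℂ) + (t : ℂ) • S
        = ((1 + a : ℝ) : ℂ) • (1 : Matrix (Fin N) (Fin N) ℂ) := by
      rw [hSdef, smul_smul, ← h]
      push_cast
      rw [add_smul, one_smul]
    rw [e, Matrix.det_smul, Matrix.det_one, mul_one, Fintype.card_fin]
  have h1 := key γ ρ (by rw [hγ]; field_simp)
  have hd : ρ * σ2 + 1 ≠ 0 := by positivity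
  have hm : (N : ℝ) * σ2 * γ + 1 = ρ * σ2 + 1 := by
    rw [hγ]; field_simp
  have h2 := key γe (ρ / (ρ * σ2 + 1)) (by rw [hγe, hm, hγ]; field_simp)
  refine ⟨h1, h2, ?_⟩
  rw [h1, h2, ← Complex.ofReal_pow, ← Complex.ofReal_pow, Complex.ofReal_re,
    Complex.ofReal_re, Real.log_pow, Real.log_pow, mul_div_mul_left _ _ hN0]
end

section
/- (Rhombus inclusion underlying Theorem 1.) Let φ, ψ : ℝ → ℝ be concave even functions with φ(0) = 0 and ψ(0) = 0, let β ∈ (0, 1], and let F > 0 and T > 0 satisfy φ(F) ≥ Real.log β and ψ(T) ≥ Real.log β. Then for every (t, f) ∈ ℝ × ℝ with |t|/T + |f|/F ≤ 1, one has β ≤ Real.exp(φ(f)) · Real.exp(ψ(t)). That is, every time–frequency point in the closed rhombus with transverse semi-diagonal T and longitudinal semi-diagonal F satisfies the correlation threshold R_f(f)·R_t(t) ≥ β. -/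
theorem concave_even_lower (g : ℝ → ℝ) (hg : ConcaveOn ℝ Set.univ g)
    (he : ∀ x : ℝ, g (-x) = g x) (h0 : g 0 = 0) (A x L : ℝ) (hA : 0 < A)
    (hL : L ≤ g A) (hx : |x| / A ≤ 1) : |x| / A * L ≤ g x := by
  have hnn : 0 ≤ |x| / A := by positivity
  have h1 := hg.2 (Set.mem_univ A) (Set.mem_univ 0) hnn (sub_nonneg.2 hx) (by ring)
  have h2 : |x| / A * A = |x| := by field_simp
  have h3 : g |x| = g x := by
    rcases abs_choice x with h | h <;> rw [h]
    exact he x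
  simp only [smul_eq_mul, h0, mul_zero, add_zero, h2, h3] at h1
  exact (mul_le_mul_of_nonneg_left hL hnn).trans h1

/-- Rhombus inclusion underlying Theorem 1: if `R_f = exp ∘ φ`, `R_t = exp ∘ ψ`
with `φ`, `ψ` concave even functions vanishing at `0`, `β ∈ (0, 1]`, and
`F, T > 0` satisfy `φ F ≥ log β` and `ψ T ≥ log β`, then every point `(t, f)`
of the closed rhombus `|t|/T + |f|/F ≤ 1` satisfies
`β ≤ R_f f * R_t t`. -/
theorem rhombus_satisfies_correlation_threshold
    (φ ψ : ℝ → ℝ)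
    (hφ : ConcaveOn ℝ Set.univ φ) (hψ : ConcaveOn ℝ Set.univ ψ)
    (hφeven : ∀ x : ℝ, φ (-x) = φ x) (hψeven : ∀ x : ℝ, ψ (-x) = ψ x)
    (hφ0 : φ 0 = 0) (hψ0 : ψ 0 = 0)
    (β : ℝ) (hβ0 : 0 < β) (hβ1 : β ≤ 1)
    (F T : ℝ) (hF : 0 < F) (hT : 0 < T)
    (hφF : Real.log β ≤ φ F) (hψT : Real.log β ≤ ψ T) :
    ∀ t f : ℝ, |t| / T + |f| / F ≤ 1 →
      β ≤ Real.exp (φ f) * Real.exp (ψ t) := by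
  intro t f h
  have ht : 0 ≤ |t| / T := by positivity
  have hf : 0 ≤ |f| / F := by positivity
  have h1 := concave_even_lower φ hφ hφeven hφ0 F f _ hF hφF (by linarith)
  have h2 := concave_even_lower ψ hψ hψeven hψ0 T t _ hT hψT (by linarith)
  have h3 : Real.log β ≤ 0 := Real.log_nonpos hβ0.le hβ1
  rw [← Real.exp_add, ← Real.log_le_iff_le_exp hβ0]
  nlinarith [mul_nonneg (sub_nonneg.2 h) (neg_nonneg.2 h3)]
end
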